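/- Asymptotic velocity consensus to the average and asymptotic formation: under the closed-loop dynamics with connected communication graph G, α ∈ (0,1), and realizable desired gaps p*_ij = q_i − q_j, every vehicle's velocity converges as t → ∞ to the average of the initial velocities, i.e. v_i(t) → (1/N)·∑_{j=1}^N v_j(0) for each i, and the spacing errors vanish asymptotically on edges, i.e. p_i(t) − p_j(t) → p*_ij as t → ∞ for all i, j with a_ij = 1. -/

import Mathlib

/-- `sig(x)^α := sign(x) · |x|^α`. -/
noncomputable def sig (x α : ℝ) : ℝ := Real.sign x * |x| ^ α

lemma sig_neg (x γ : ℝ) : sig (-x) γ = -sig x γ := by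
  simp [sig, Real.sign_neg]

lemma sig_eq_rpow_mul (x γ : ℝ) : sig x γ = |x| ^ (γ - 1) * x := by
  rcases lt_trichotomy x 0 with h | h | h
  · have hx : 0 < |x| := abs_pos.2 h.ne
    rw [sig, Real.sign_of_neg h, Real.rpow_sub_one hx.ne', abs_of_neg h]
    have := h.ne
    field_simp
  · subst h
    simp [sig]
  · have hx : 0 < |x| := abs_pos.2 h.ne'
    rw [sig, Real.sign_of_pos h, Real.rpow_sub_one hx.ne', abs_of_pos h]
    field_simp

lemma sig_mul_self (x : ℝ) {γ : ℝ} (hγ : 0 < γ) : sig x γ * x = |x| ^ (γ + 1) := by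
  rcases eq_or_ne x 0 with h | h
  · subst h
    simp [Real.zero_rpow (by linarith : γ + 1 ≠ 0)]
  · have hx : |x| ≠ 0 := abs_ne_zero.2 h
    have h1 : Real.sign x * x = |x| := by
      rcases lt_or_gt_of_ne h with h | h
      · rw [Real.sign_of_neg h, abs_of_neg h]; ring
      · rw [Real.sign_of_pos h, abs_of_pos h]; ring
    rw [Real.rpow_add_one hx, sig, mul_right_comm, h1, mul_comm]

lemma hasDerivAt_abs_rpow_div (x : ℝ) {γ : ℝ} (hγ : 0 < γ) :
    HasDerivAt (fun s : ℝ => |s| ^ (γ + 1) / (γ + 1)) (sig x γ) x := by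
  have h := (hasDerivAt_abs_rpow x (by linarith : 1 < γ + 1)).div_const (γ + 1)
  refine h.congr_deriv ?_
  rw [sig_eq_rpow_mul x γ, show γ + 1 - 2 = γ - 1 by ring]
  have : γ + 1 ≠ 0 := by linarith
  field_simp

lemma continuous_sig {γ : ℝ} (hγ : 0 < γ) : Continuous fun x => sig x γ := by
  rw [continuous_iff_continuousAt]
  intro x
  rcases eq_or_ne x 0 with h | h
  · subst h
    have h0 : Filter.Tendsto (fun x : ℝ => |x| ^ γ) (nhds 0) (nhds 0) := by
      have : Continuous fun x : ℝ => |x| ^ γ := continuous_abs.rpow_const fun _ => Or.inr hγ.le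
      simpa [Real.zero_rpow hγ.ne'] using this.tendsto 0
    have : Filter.Tendsto (fun x => sig x γ) (nhds 0) (nhds 0) := by
      refine squeeze_zero_norm (fun y => ?_) h0
      have hs : |Real.sign y| ≤ 1 := by
        rcases Real.sign_apply_eq y with h | h | h <;> simp [h]
      rw [sig, norm_mul, Real.norm_eq_abs, Real.norm_eq_abs,
        abs_of_nonneg (Real.rpow_nonneg (abs_nonneg y) γ)]
      exact mul_le_of_le_one_left (Real.rpow_nonneg (abs_nonneg y) γ) hs
    simpa [ContinuousAt, sig] using this
  · have hfun : (fun x => sig x γ) = fun x => |x| ^ (γ - 1) * x :=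
      funext fun y => sig_eq_rpow_mul y γ
    rw [hfun]
    exact (continuous_abs.continuousAt.rpow_const (Or.inl (abs_ne_zero.2 h))).mul continuousAt_id

lemma tendsto_zero_of_sig_mul_self {γ : ℝ} (hγ : 0 < γ) {l : Filter ℝ} {f : ℝ → ℝ}
    (h : Filter.Tendsto (fun t => sig (f t) γ * f t) l (nhds 0)) :
    Filter.Tendsto f l (nhds 0) := by
  have hγ' : 0 < γ + 1 := by linarith
  have h1 := h.rpow_const (p := (γ + 1)⁻¹) (Or.inr (by positivity))
  rw [Real.zero_rpow (by positivity)] at h1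
  rw [tendsto_zero_iff_abs_tendsto_zero]
  refine h1.congr fun t => ?_
  rw [sig_mul_self _ hγ, Real.rpow_rpow_inv (abs_nonneg _) hγ'.ne']
  rfl

/-- Symmetrization of a double sum against an antisymmetric kernel. -/
lemma sum_mul_sum_antisymm {ι : Type*} [Fintype ι] (K : ι → ι → ℝ)
    (hK : ∀ i j, K j i = -K i j) (f : ι → ℝ) :
    ∑ i, f i * ∑ j, K i j = 1 / 2 * ∑ i, ∑ j, K i j * (f i - f j) := by
  have h1 : ∑ i, f i * ∑ j, K i j = ∑ i, ∑ j, K i j * f i := by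
    simp only [Finset.mul_sum, mul_comm]
  have h2 : ∑ i, ∑ j, K i j * f j = -∑ i, ∑ j, K i j * f i := by
    rw [Finset.sum_comm]
    simp only [← Finset.sum_neg_distrib]
    refine Finset.sum_congr rfl fun i _ => Finset.sum_congr rfl fun j _ => ?_
    rw [hK i j]; ring
  simp only [mul_sub, Finset.sum_sub_distrib, h2, h1]
  ring

/-- If the total weighted dissipation vanishes in the limit, so does every difference
carrying unit weight. -/
lemma tendsto_sub_of_tendsto_sum_sig {ι : Type*} [Fintype ι] {a : ι → ι → ℝ}
    (ha : ∀ i j, 0 ≤ a i j) {γ : ℝ} (hγ : 0 < γ) {f : ι → ℝ → ℝ} {l : Filter ℝ}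
    (h : Filter.Tendsto (fun t => ∑ i, ∑ j, a i j * sig (f i t - f j t) γ * (f i t - f j t)) l
      (nhds 0)) {i j : ι} (hij : a i j = 1) :
    Filter.Tendsto (fun t => f i t - f j t) l (nhds 0) := by
  have hnn : ∀ t i j, 0 ≤ a i j * sig (f i t - f j t) γ * (f i t - f j t) := by
    intro t i j
    rw [mul_assoc, sig_mul_self _ hγ]
    exact mul_nonneg (ha i j) (Real.rpow_nonneg (abs_nonneg _) _)
  refine tendsto_zero_of_sig_mul_self hγ (squeeze_zero (fun t => ?_) (fun t => ?_) h)
  · simpa [hij] using hnn t i j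
  · calc sig (f i t - f j t) γ * (f i t - f j t)
        = a i j * sig (f i t - f j t) γ * (f i t - f j t) := by rw [hij, one_mul]
      _ ≤ ∑ j, a i j * sig (f i t - f j t) γ * (f i t - f j t) :=
          Finset.single_le_sum (f := fun j => a i j * sig (f i t - f j t) γ * (f i t - f j t))
            (fun j _ => hnn t i j) (Finset.mem_univ j)
      _ ≤ _ := Finset.single_le_sum
            (f := fun i => ∑ j, a i j * sig (f i t - f j t) γ * (f i t - f j t))
            (fun i _ => Finset.sum_nonneg fun j _ => hnn t i j) (Finset.mem_univ i)

lemma SimpleGraph.Connected.rel_of_adj {V : Type*} {G : SimpleGraph V} (hG : G.Connected)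
    {R : V → V → Prop} (hrefl : ∀ i, R i i) (htrans : ∀ i j k, R i j → R j k → R i k)
    (hadj : ∀ i j, G.Adj i j → R i j) (i j : V) : R i j := by
  obtain ⟨w⟩ := hG.preconnected i j
  induction w with
  | nil => exact hrefl _
  | cons h _ ih => exact htrans _ _ _ (hadj _ _ h) ih

/-- Barbalat's lemma along a bounded trajectory of an autonomous system with continuous
vector field. -/
lemma tendsto_zero_of_hasDerivAt_comp_bounded {E : Type*} [NormedAddCommGroup E]
    [NormedSpace ℝ E] [ProperSpace E] {F : E → E} (hF : Continuous F) {z : ℝ → E}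
    (hz : ∀ t, 0 ≤ t → HasDerivAt z (F (z t)) t) {R : ℝ} (hR : ∀ t, 0 ≤ t → ‖z t‖ ≤ R)
    {g : E → ℝ} (hg : Continuous g) {h : ℝ → ℝ}
    (hh : ∀ t, 0 ≤ t → HasDerivAt h (g (z t)) t) {L : ℝ}
    (hL : Filter.Tendsto h Filter.atTop (nhds L)) :
    Filter.Tendsto (fun t => g (z t)) Filter.atTop (nhds 0) := by
  have hK : IsCompact (Metric.closedBall (0 : E) R) := isCompact_closedBall 0 R
  have hmem : ∀ t, 0 ≤ t → z t ∈ Metric.closedBall (0 : E) R := fun t ht => by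
    simpa using hR t ht
  obtain ⟨C, hC⟩ := hK.exists_bound_of_continuousOn hF.continuousOn
  have hlip : LipschitzOnWith C.toNNReal z (Set.Ici 0) :=
    (convex_Ici 0).lipschitzOnWith_of_nnnorm_hasDerivWithin_le
      (fun t ht => (hz t ht).hasDerivWithinAt) fun t ht => by
        rw [← NNReal.coe_le_coe, coe_nnnorm]
        exact (hC _ (hmem t ht)).trans (Real.le_coe_toNNReal C)
  have huc : UniformContinuousOn (fun t => g (z t)) (Set.Ici 0) :=
    (hK.uniformContinuousOn_of_continuous hg.continuousOn).comp hlip.uniformContinuousOn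
      fun t ht => hmem t ht
  rw [Metric.tendsto_atTop]
  intro ε hε
  obtain ⟨δ, hδ, hucδ⟩ := Metric.uniformContinuousOn_iff.1 huc (ε / 2) (by positivity)
  obtain ⟨T, hT⟩ := Metric.cauchySeq_iff.1 hL.cauchySeq (ε / 2 * (δ / 2)) (by positivity)
  refine ⟨max T 0, fun t ht => ?_⟩
  have htT : T ≤ t := (le_max_left _ _).trans ht
  have ht0 : 0 ≤ t := (le_max_right _ _).trans ht
  obtain ⟨s, hs, hslope⟩ := exists_hasDerivAt_eq_slope h (fun s => g (z s))
    (by linarith : t < t + δ / 2)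
    (fun s hs => (hh s (ht0.trans hs.1)).continuousAt.continuousWithinAt)
    (fun s hs => hh s (ht0.trans hs.1.le))
  have h1 : |g (z s)| < ε / 2 := by
    have h2 := hT (t + δ / 2) (by linarith) t htT
    rw [Real.dist_eq] at h2
    rw [hslope, add_sub_cancel_left, abs_div, abs_of_pos (by positivity : 0 < δ / 2),
      div_lt_iff₀ (by positivity)]
    exact h2
  have h3 := hucδ t ht0 s (ht0.trans hs.1.le) (by
    rw [Real.dist_eq, abs_lt]; constructor <;> linarith [hs.1, hs.2])
  rw [Real.dist_eq] at h3 ⊢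
  have := abs_sub_abs_le_abs_sub (g (z t)) (g (z s))
  rw [sub_zero]
  linarith

lemma tendsto_of_hasDerivAt_nonpos_of_nonneg {h h' : ℝ → ℝ}
    (hd : ∀ t, 0 ≤ t → HasDerivAt h (h' t) t) (hneg : ∀ t, 0 ≤ t → h' t ≤ 0)
    (hnn : ∀ t, 0 ≤ h t) :
    (∀ t, 0 ≤ t → h t ≤ h 0) ∧ ∃ L, Filter.Tendsto h Filter.atTop (nhds L) := by
  have hanti : AntitoneOn h (Set.Ici 0) := by
    refine antitoneOn_of_deriv_nonpos (convex_Ici 0)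
      (fun t ht => (hd t ht).continuousAt.continuousWithinAt) ?_ ?_
    · intro t ht
      rw [interior_Ici] at ht
      exact (hd t (le_of_lt ht)).differentiableAt.differentiableWithinAt
    · intro t ht
      rw [interior_Ici] at ht
      rw [(hd t (le_of_lt ht)).deriv]
      exact hneg t (le_of_lt ht)
  refine ⟨fun t ht => hanti (Set.mem_Ici.2 le_rfl) ht ht, ?_⟩
  have hanti' : Antitone fun t => h (max t 0) := fun s t hst =>
    hanti (Set.mem_Ici.2 (le_max_right _ _)) (Set.mem_Ici.2 (le_max_right _ _))
      (max_le_max_right 0 hst)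
  have hlim := tendsto_atTop_ciInf hanti' ⟨0, by rintro _ ⟨t, rfl⟩; exact hnn _⟩
  refine ⟨_, hlim.congr' ?_⟩
  filter_upwards [Filter.eventually_ge_atTop 0] with t ht
  rw [max_eq_left ht]

/-- Kinetic energy plus the pairwise potential whose gradient is the `sig`-coupling. -/
noncomputable def formationEnergy {ι : Type*} [Fintype ι] (a : ι → ι → ℝ) (β : ℝ)
    (x v : ι → ℝ) : ℝ :=
  1 / 2 * ∑ i, v i ^ 2 + 1 / 2 * ∑ i, ∑ j, a i j * (|x i - x j| ^ (β + 1) / (β + 1))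

section Energy

variable {ι : Type*} [Fintype ι] {a : ι → ι → ℝ} {β : ℝ}

lemma formationEnergy_nonneg (ha : ∀ i j, 0 ≤ a i j) (hβ : 0 < β) (x v : ι → ℝ) :
    0 ≤ formationEnergy a β x v := by
  have h : ∀ i j, 0 ≤ a i j * (|x i - x j| ^ (β + 1) / (β + 1)) := fun i j =>
    mul_nonneg (ha i j) (by positivity)
  have h' := Finset.sum_nonneg fun i (_ : i ∈ Finset.univ) =>
    Finset.sum_nonneg fun j (_ : j ∈ Finset.univ) => h i j
  unfold formationEnergy
  positivity

lemma sq_le_formationEnergy (ha : ∀ i j, 0 ≤ a i j) (hβ : 0 < β) (x v : ι → ℝ) (i : ι) :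
    v i ^ 2 ≤ 2 * formationEnergy a β x v := by
  have h : ∀ i j, 0 ≤ a i j * (|x i - x j| ^ (β + 1) / (β + 1)) := fun i j =>
    mul_nonneg (ha i j) (by positivity)
  have h' := Finset.sum_nonneg fun i (_ : i ∈ Finset.univ) =>
    Finset.sum_nonneg fun j (_ : j ∈ Finset.univ) => h i j
  have h2 := Finset.single_le_sum (f := fun i => v i ^ 2) (fun i _ => sq_nonneg (v i))
    (Finset.mem_univ i)
  unfold formationEnergy
  linarith

lemma abs_sub_rpow_le_formationEnergy (ha : ∀ i j, 0 ≤ a i j) (hβ : 0 < β) (x v : ι → ℝ)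
    {i j : ι} (hij : a i j = 1) :
    |x i - x j| ^ (β + 1) ≤ (β + 1) * (2 * formationEnergy a β x v) := by
  have h : ∀ i j, 0 ≤ a i j * (|x i - x j| ^ (β + 1) / (β + 1)) := fun i j =>
    mul_nonneg (ha i j) (by positivity)
  have h1 := Finset.single_le_sum (f := fun j => a i j * (|x i - x j| ^ (β + 1) / (β + 1)))
    (fun j _ => h i j) (Finset.mem_univ j)
  have h2 := Finset.single_le_sum
    (f := fun i => ∑ j, a i j * (|x i - x j| ^ (β + 1) / (β + 1)))
    (fun i _ => Finset.sum_nonneg fun j _ => h i j) (Finset.mem_univ i)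
  have h3 : 0 ≤ ∑ i, v i ^ 2 := Finset.sum_nonneg fun i _ => sq_nonneg _
  rw [← div_le_iff₀' (by linarith)]
  simp only [hij, one_mul] at h1
  unfold formationEnergy
  linarith

lemma hasDerivAt_formationEnergy (hsymm : ∀ i j, a j i = a i j) (hβ : 0 < β) {α : ℝ}
    {x v : ι → ℝ → ℝ} {t : ℝ} (hx : ∀ i, HasDerivAt (x i) (v i t) t)
    (hv : ∀ i, HasDerivAt (v i) (-(∑ j, a i j * sig (x i t - x j t) β)
      - ∑ j, a i j * sig (v i t - v j t) α) t) :
    HasDerivAt (fun s => formationEnergy a β (fun i => x i s) fun i => v i s)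
      (-(1 / 2 * ∑ i, ∑ j, a i j * sig (v i t - v j t) α * (v i t - v j t))) t := by
  have hK : ∀ (γ : ℝ) (f : ι → ℝ) i j,
      a j i * sig (f j - f i) γ = -(a i j * sig (f i - f j) γ) := fun γ f i j => by
    rw [hsymm i j, ← neg_sub (f i) (f j), sig_neg]; ring
  have hkin := (HasDerivAt.fun_sum fun i (_ : i ∈ Finset.univ) =>
    (hv i).fun_pow 2).const_mul (1 / 2)
  have hpot := (HasDerivAt.fun_sum fun i (_ : i ∈ Finset.univ) =>
    HasDerivAt.fun_sum fun j (_ : j ∈ Finset.univ) =>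
      (((hasDerivAt_abs_rpow_div (x i t - x j t) hβ).comp t
        ((hx i).sub (hx j))).const_mul (a i j))).const_mul (1 / 2)
  have hsum := hkin.add hpot
  unfold formationEnergy
  refine hsum.congr_deriv ?_
  rw [← sum_mul_sum_antisymm (fun i j => a i j * sig (v i t - v j t) α)
    (hK α fun i => v i t) fun i => v i t]
  have hp := sum_mul_sum_antisymm (fun i j => a i j * sig (x i t - x j t) β)
    (hK β fun i => x i t) fun i => v i t
  simp only [mul_assoc] at hp ⊢
  rw [← hp, Finset.mul_sum, ← Finset.sum_add_distrib, ← Finset.sum_neg_distrib]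
  refine Finset.sum_congr rfl fun i _ => ?_
  push_cast
  ring

end Energy

/-- Asymptotic velocity consensus to the average of the initial velocities and
asymptotic achievement of the desired formation on edges. -/
theorem asymptotic_consensus_and_formation
    (N : ℕ) (G : SimpleGraph (Fin N)) [DecidableRel G.Adj] (hconn : G.Connected)
    (a : Fin N → Fin N → ℝ) (ha : ∀ i j, a i j = if G.Adj i j then 1 else 0)
    (α : ℝ) (hα : α ∈ Set.Ioo (0 : ℝ) 1)
    (q : Fin N → ℝ) (pstar : Fin N → Fin N → ℝ)
    (hps : ∀ i j, pstar i j = q i - q j)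
    (p v : Fin N → ℝ → ℝ)
    (hdp : ∀ i, ∀ t : ℝ, 0 ≤ t → HasDerivAt (p i) (v i t) t)
    (hdv : ∀ i, ∀ t : ℝ, 0 ≤ t → HasDerivAt (v i)
      (-(∑ j, a i j * sig (p i t - p j t - pstar i j) (2 * α / (1 + α)))
        - ∑ j, a i j * sig (v i t - v j t) α) t) :
    (∀ i, Filter.Tendsto (v i) Filter.atTop
        (nhds ((1 / (N : ℝ)) * ∑ j, v j 0))) ∧
    (∀ i j, a i j = 1 → Filter.Tendsto (fun t => p i t - p j t) Filter.atTop
        (nhds (pstar i j))) := by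
  have hα0 : 0 < α := hα.1
  obtain ⟨β, hβdef⟩ : ∃ β, β = 2 * α / (1 + α) := ⟨_, rfl⟩
  have hβ : 0 < β := by rw [hβdef]; positivity
  obtain ⟨x, hxdef⟩ : ∃ x : Fin N → ℝ → ℝ, x = fun i t => p i t - q i := ⟨_, rfl⟩
  have hxp : ∀ i j t, p i t - p j t - pstar i j = x i t - x j t := fun i j t => by
    simp only [hxdef, hps]; ring
  simp only [hxp, ← hβdef] at hdv
  have hdx : ∀ i t, 0 ≤ t → HasDerivAt (x i) (v i t) t := fun i t ht => by
    rw [hxdef]; exact (hdp i t ht).sub_const (q i)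
  have hann : ∀ i j, 0 ≤ a i j := fun i j => by rw [ha]; split_ifs <;> norm_num
  have hsymm : ∀ i j, a j i = a i j := fun i j => by simp only [ha, G.adj_comm]
  have hadj : ∀ i j, G.Adj i j → a i j = 1 := fun i j h => by rw [ha, if_pos h]
  have hK : ∀ (γ : ℝ) (f : Fin N → ℝ) i j,
      a j i * sig (f j - f i) γ = -(a i j * sig (f i - f j) γ) := fun γ f i j => by
    rw [hsymm i j, ← neg_sub (f i) (f j), sig_neg]; ring
  have hdE := fun t ht =>
    hasDerivAt_formationEnergy hsymm hβ (fun i => hdx i t ht) fun i => hdv i t ht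
  obtain ⟨hEle, L, hEL⟩ := tendsto_of_hasDerivAt_nonpos_of_nonneg hdE
    (fun t _ => neg_nonpos.2 (mul_nonneg (by norm_num) (Finset.sum_nonneg fun i _ =>
      Finset.sum_nonneg fun j _ => by
        rw [mul_assoc, sig_mul_self _ hα0]
        exact mul_nonneg (hann i j) (Real.rpow_nonneg (abs_nonneg _) _))))
    fun t => formationEnergy_nonneg hann hβ _ _
  set E₀ := formationEnergy a β (fun i => x i 0) fun i => v i 0
  have hE₀ : 0 ≤ E₀ := formationEnergy_nonneg hann hβ _ _
  have hvbd : ∀ i t, 0 ≤ t → |v i t| ≤ √(2 * E₀) := fun i t ht =>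
    Real.abs_le_sqrt ((sq_le_formationEnergy hann hβ _ _ i).trans
      (mul_le_mul_of_nonneg_left (hEle t ht) zero_le_two))
  have hxbd : ∀ i j, ∃ C, ∀ t, 0 ≤ t → |x i t - x j t| ≤ C := by
    refine hconn.rel_of_adj (fun i => ⟨0, by simp⟩) ?_ ?_
    · rintro i j k ⟨C, hC⟩ ⟨D, hD⟩
      exact ⟨C + D, fun t ht => (abs_sub_le _ (x j t) _).trans (add_le_add (hC t ht) (hD t ht))⟩
    · intro i j hij
      refine ⟨((β + 1) * (2 * E₀)) ^ (β + 1)⁻¹, fun t ht => ?_⟩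
      rw [Real.le_rpow_inv_iff_of_pos (abs_nonneg _) (by positivity) (by positivity)]
      exact (abs_sub_rpow_le_formationEnergy hann hβ (fun i => x i t) (fun i => v i t)
        (hadj i j hij)).trans
        (mul_le_mul_of_nonneg_left (mul_le_mul_of_nonneg_left (hEle t ht) zero_le_two)
          (by positivity))
  have i₀ : Fin N := hconn.nonempty.some
  choose C hC using fun i => hxbd i i₀
  let F : (Fin N → ℝ) × (Fin N → ℝ) → (Fin N → ℝ) × (Fin N → ℝ) := fun z =>
    (fun i => z.2 i - z.2 i₀, fun i => -(∑ j, a i j * sig (z.1 i - z.1 j) β)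
      - ∑ j, a i j * sig (z.2 i - z.2 j) α)
  let z : ℝ → (Fin N → ℝ) × (Fin N → ℝ) := fun t => (fun i => x i t - x i₀ t, fun i => v i t)
  have hcβ := continuous_sig hβ
  have hcα := continuous_sig hα0
  have hF : Continuous F := by
    refine Continuous.prodMk (by fun_prop) (continuous_pi fun i => ?_)
    refine (continuous_finsetSum _ fun j _ => ?_).neg.sub (continuous_finsetSum _ fun j _ => ?_)
    · exact continuous_const.mul (hcβ.comp (by fun_prop))
    · exact continuous_const.mul (hcα.comp (by fun_prop))
  have hz : ∀ t, 0 ≤ t → HasDerivAt z (F (z t)) t := fun t ht => by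
    refine HasDerivAt.prodMk (hasDerivAt_pi.2 fun i => (hdx i t ht).sub (hdx i₀ t ht))
      (hasDerivAt_pi.2 fun i => ?_)
    simpa only [z, sub_sub_sub_cancel_right] using hdv i t ht
  have hR : ∀ t, 0 ≤ t → ‖z t‖ ≤ max (∑ i, |C i|) (√(2 * E₀)) := fun t ht => by
    refine max_le_max ?_ ?_
    · refine (pi_norm_le_iff_of_nonneg (Finset.sum_nonneg fun i _ => abs_nonneg _)).2 fun i => ?_
      exact (hC i t ht).trans ((le_abs_self _).trans
        (Finset.single_le_sum (f := fun i => |C i|) (fun i _ => abs_nonneg _) (Finset.mem_univ i)))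
    · exact (pi_norm_le_iff_of_nonneg (Real.sqrt_nonneg _)).2 fun i => hvbd i t ht
  have hdiss : Filter.Tendsto
      (fun t => ∑ i, ∑ j, a i j * sig (v i t - v j t) α * (v i t - v j t))
      Filter.atTop (nhds 0) := by
    have hg : Continuous fun z : (Fin N → ℝ) × (Fin N → ℝ) =>
        -(1 / 2 * ∑ i, ∑ j, a i j * sig (z.2 i - z.2 j) α * (z.2 i - z.2 j)) := by
      refine (continuous_const.mul (continuous_finsetSum _ fun i _ =>
        continuous_finsetSum _ fun j _ => ?_)).neg
      exact (continuous_const.mul (hcα.comp (by fun_prop))).mul (by fun_prop)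
    have h := (tendsto_zero_of_hasDerivAt_comp_bounded hF hz hR hg hdE hEL).const_mul (-2)
    rw [mul_zero] at h
    refine h.congr fun t => ?_
    simp only [z]
    ring
  have hvv : ∀ i j, Filter.Tendsto (fun t => v i t - v j t) Filter.atTop (nhds 0) := by
    refine hconn.rel_of_adj (fun i => by simp) ?_
      fun i j hij => tendsto_sub_of_tendsto_sum_sig hann hα0 hdiss (hadj i j hij)
    intro i j k hij hjk
    simpa using hij.add hjk
  have hsum : ∀ t, 0 ≤ t → ∑ j, v j t = ∑ j, v j 0 := by
    have hd : ∀ t, 0 ≤ t → HasDerivAt (fun t => ∑ j, v j t) 0 t := fun t ht => by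
      refine (HasDerivAt.fun_sum fun i (_ : i ∈ Finset.univ) => hdv i t ht).congr_deriv ?_
      have h1 := sum_mul_sum_antisymm _ (hK β fun i => x i t) fun _ => 1
      have h2 := sum_mul_sum_antisymm _ (hK α fun i => v i t) fun _ => 1
      simp only [one_mul, sub_self, mul_zero, Finset.sum_const_zero] at h1 h2
      rw [Finset.sum_sub_distrib, Finset.sum_neg_distrib, h1, h2]
      simp
    intro t ht
    refine constant_of_has_deriv_right_zero (a := 0) (b := t)
      (fun s hs => (hd s hs.1).continuousAt.continuousWithinAt)
      (fun s hs => (hd s hs.1).hasDerivWithinAt) t ⟨ht, le_rfl⟩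
  have hN : (N : ℝ) ≠ 0 := Nat.cast_ne_zero.2 (Fin.pos i₀).ne'
  have hcons : ∀ i, Filter.Tendsto (v i) Filter.atTop (nhds ((1 / (N : ℝ)) * ∑ j, v j 0)) := by
    intro i
    have h := ((tendsto_finsetSum Finset.univ fun j _ => hvv i j).const_mul
      (1 / (N : ℝ))).add_const ((1 / (N : ℝ)) * ∑ j, v j 0)
    simp only [Finset.sum_const_zero, mul_zero, zero_add] at h
    refine h.congr' ?_
    filter_upwards [Filter.eventually_ge_atTop 0] with t ht
    rw [← hsum t ht, Finset.sum_sub_distrib, Finset.sum_const, Finset.card_univ, Fintype.card_fin,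
      nsmul_eq_mul]
    field_simp
    ring
  refine ⟨hcons, fun i j hij => ?_⟩
  have hforce : ∀ i, Filter.Tendsto (fun t => ∑ j, a i j * sig (x i t - x j t) β)
      Filter.atTop (nhds 0) := by
    intro i
    have hacc : Filter.Tendsto (fun t => (F (z t)).2 i) Filter.atTop (nhds 0) :=
      tendsto_zero_of_hasDerivAt_comp_bounded (g := fun z => (F z).2 i) hF hz hR (by fun_prop)
        (fun t ht => hasDerivAt_pi.1 (hz t ht).snd i) (hcons i)
    have hdamp : Filter.Tendsto (fun t => ∑ j, a i j * sig (v i t - v j t) α)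
        Filter.atTop (nhds 0) := by
      have h := tendsto_finsetSum Finset.univ fun j _ =>
        ((hcα.tendsto 0).comp (hvv i j)).const_mul (a i j)
      simpa [sig, Function.comp_def] using h
    have h := (hacc.add hdamp).neg
    rw [add_zero, neg_zero] at h
    refine h.congr fun t => ?_
    simp only [F, z, sub_sub_sub_cancel_right]
    ring
  have hpot : Filter.Tendsto
      (fun t => ∑ i, ∑ j, a i j * sig (x i t - x j t) β * (x i t - x j t))
      Filter.atTop (nhds 0) := by
    have hterm : ∀ i, Filter.Tendsto
        (fun t => (x i t - x i₀ t) * ∑ j, a i j * sig (x i t - x j t) β)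
        Filter.atTop (nhds 0) := fun i => by
      have h := (hforce i).abs.const_mul (C i)
      rw [abs_zero, mul_zero] at h
      refine squeeze_zero_norm' ?_ h
      filter_upwards [Filter.eventually_ge_atTop 0] with t ht
      rw [norm_mul]
      exact mul_le_mul_of_nonneg_right (hC i t ht) (abs_nonneg _)
    have h := (tendsto_finsetSum Finset.univ fun i _ => hterm i).const_mul 2
    rw [Finset.sum_const_zero, mul_zero] at h
    refine h.congr fun t => ?_
    rw [sum_mul_sum_antisymm _ (hK β fun i => x i t) fun i => x i t - x i₀ t]
    simp only [sub_sub_sub_cancel_right]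
    ring
  have h := (tendsto_sub_of_tendsto_sum_sig hann hβ hpot hij).add_const (pstar i j)
  rw [zero_add] at h
  refine h.congr fun t => ?_
  rw [← hxp]
  ring
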